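/- arXiv:2502.03267 — 2 statements merged into one kernel-verified Lean document; each statement's English description precedes it below -/
import Mathlib

section
/- Let n ≥ 1 and δ ∈ (0, n]. Suppose f ∈ nL¹(ℝⁿ, H̃^δ_∞) is an nL¹-limit of continuous functions. Then limsup_{r→0⁺} (1/H̃^δ_∞(B(x,r))) ∫_{B(x,r)} |f(y) − f(x)| dH̃^δ_∞(y) = 0 for H̃^δ_∞-almost every x ∈ ℝⁿ. -/
open MeasureTheory Set Metric Filter Topology
open scoped ENNReal

noncomputable section

/-- Euclidean space `ℝⁿ`. -/
abbrev En (n : ℕ) : Type := EuclideanSpace ℝ (Fin n)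

/-- The half-open dyadic cube `2^k (m + [0,1)ⁿ)`, `k : ℤ`, `m : ℤⁿ`. -/
def dyadicCube (n : ℕ) (k : ℤ) (m : Fin n → ℤ) : Set (En n) :=
  {x | ∀ i, (m i : ℝ) * 2 ^ k ≤ x i ∧ x i < ((m i : ℝ) + 1) * 2 ^ k}

/-- The `δ`-dimensional dyadic Hausdorff content `H̃^δ_∞`: the infimum of `Σ ℓ(Q_i)^δ`
over all countable collections of dyadic cubes whose union's interior covers `E`. -/
def dyadicContent (n : ℕ) (δ : ℝ) (E : Set (En n)) : ℝ≥0∞ :=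
  ⨅ (c : ℕ → ℤ × (Fin n → ℤ))
    (_ : E ⊆ interior (⋃ i, dyadicCube n (c i).1 (c i).2)),
    ∑' i, ENNReal.ofReal (((2 : ℝ) ^ (c i).1) ^ δ)

/-- The Choquet integral `∫_Ω f dH̃^δ_∞ := ∫_0^∞ H̃^δ_∞({x ∈ Ω : f x > t}) dt`
of a `[0,∞]`-valued function over `Ω ⊆ ℝⁿ`. -/
def choquetIntegral (n : ℕ) (δ : ℝ) (Ω : Set (En n)) (f : En n → ℝ≥0∞) : ℝ≥0∞ :=
  ∫⁻ t in Ioi (0 : ℝ), dyadicContent n δ {x | x ∈ Ω ∧ ENNReal.ofReal t < f x}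

/-- The Choquet integral `∫_Ω |f| dH̃^δ_∞` of a real-valued function. -/
def choquetIntegralAbs (n : ℕ) (δ : ℝ) (Ω : Set (En n)) (f : En n → ℝ) : ℝ≥0∞ :=
  choquetIntegral n δ Ω (fun x => ENNReal.ofReal |f x|)

/-- The Choquet integral `∫_Ω |f| dH̃^δ_∞` of an extended-real-valued function. -/
def choquetIntegralEAbs (n : ℕ) (δ : ℝ) (Ω : Set (En n)) (f : En n → EReal) : ℝ≥0∞ :=
  choquetIntegral n δ Ω (fun x => (f x).abs)

/-- The ball average `f^δ_{B(x,r)} := (1/H̃^δ_∞(B(x,r))) ∫_{B(x,r)} f dH̃^δ_∞`. -/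
def ballAvg (n : ℕ) (δ : ℝ) (f : En n → ℝ≥0∞) (x : En n) (r : ℝ) : ℝ≥0∞ :=
  choquetIntegral n δ (ball x r) f / dyadicContent n δ (ball x r)

/-- The Hausdorff-content centred maximal function `M^δ f(x)`. -/
def maximal (n : ℕ) (δ : ℝ) (f : En n → ℝ≥0∞) (x : En n) : ℝ≥0∞ :=
  ⨆ (r : ℝ) (_ : 0 < r), ballAvg n δ f x r

/-- `f^δ_*(x) := limsup_{r→0⁺} (1/H̃^δ_∞(B(x,r))) ∫_{B(x,r)} |f(y) − f(x)| dH̃^δ_∞(y)`. -/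
def lebDev (n : ℕ) (δ : ℝ) (f : En n → ℝ) (x : En n) : ℝ≥0∞ :=
  limsup (fun r : ℝ => choquetIntegralAbs n δ (ball x r) (fun y => f y - f x) /
    dyadicContent n δ (ball x r)) (𝓝[>] (0 : ℝ))

/-- `limsup_{r→0⁺} f^δ_{B(x,r)}` of the ball averages. -/
def limsupAvg (n : ℕ) (δ : ℝ) (f : En n → ℝ≥0∞) (x : En n) : ℝ≥0∞ :=
  limsup (fun r : ℝ => ballAvg n δ f x r) (𝓝[>] (0 : ℝ))


/-- The weight of a dyadic cube of generation `k`. -/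
def cubeW (δ : ℝ) (k : ℤ) : ℝ≥0∞ := ENNReal.ofReal (((2 : ℝ) ^ k) ^ δ)

/-- The lower corner of a dyadic cube. -/
def cubeCorner (n : ℕ) (k : ℤ) (m : Fin n → ℤ) : En n := WithLp.toLp 2 (fun i => (m i : ℝ) * 2 ^ k)

lemma content_mono (n : ℕ) (δ : ℝ) {E F : Set (En n)} (h : E ⊆ F) :
    dyadicContent n δ E ≤ dyadicContent n δ F := by
  unfold dyadicContent
  exact le_iInf fun c => le_iInf fun hc => iInf₂_le c (h.trans hc)

lemma exists_small_cube (δ : ℝ) (hδ : 0 < δ) (ε : ℝ) (hε : 0 < ε) :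
    ∃ k : ℤ, cubeW δ k ≤ ENNReal.ofReal ε := by
  obtain ⟨N, hN⟩ := exists_pow_lt_of_lt_one (Real.rpow_pos_of_pos hε (1 / δ))
    (by norm_num : (1 / 2 : ℝ) < 1)
  refine ⟨-(N : ℤ), ENNReal.ofReal_le_ofReal ?_⟩
  have h1 : (2 : ℝ) ^ (-(N : ℤ)) = (1 / 2) ^ N := by simp
  rw [h1]
  calc ((1 / 2 : ℝ) ^ N) ^ δ ≤ (ε ^ (1 / δ)) ^ δ :=
        Real.rpow_le_rpow (by positivity) hN.le hδ.le
    _ = ε := by rw [← Real.rpow_mul hε.le, one_div_mul_cancel hδ.ne', Real.rpow_one]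

lemma content_le_tsum (n : ℕ) (δ : ℝ) (hδ : 0 < δ) {ι : Type} [Countable ι]
    (c : ι → ℤ × (Fin n → ℤ)) (E : Set (En n))
    (hE : E ⊆ interior (⋃ i, dyadicCube n (c i).1 (c i).2)) :
    dyadicContent n δ E ≤ ∑' i, cubeW δ (c i).1 := by
  refine ENNReal.le_of_forall_pos_le_add fun ε hε _ => ?_
  obtain ⟨ε', hε', hs⟩ := ENNReal.exists_pos_sum_of_countable
    (ENNReal.coe_ne_zero.2 hε.ne') ℕ
  choose k hk using fun j => exists_small_cube δ hδ (ε' j) (hε' j)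
  obtain ⟨D⟩ := nonempty_denumerable (ι ⊕ ℕ)
  let e : (ι ⊕ ℕ) ≃ ℕ := Denumerable.eqv _
  let d : ι ⊕ ℕ → ℤ × (Fin n → ℤ) := Sum.elim c (fun j => (k j, fun _ => 0))
  have h1 : dyadicContent n δ E ≤ ∑' j : ℕ, cubeW δ (d (e.symm j)).1 := by
    refine iInf₂_le (fun j => d (e.symm j)) (hE.trans (interior_mono ?_))
    refine iUnion_subset fun i => ?_
    refine subset_iUnion_of_subset (e (Sum.inl i)) ?_
    simp [d]
  refine h1.trans ?_
  rw [e.symm.tsum_eq (fun s => cubeW δ (d s).1), Summable.tsum_sum ENNReal.summable ENNReal.summable]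
  refine add_le_add le_rfl (le_trans (ENNReal.tsum_le_tsum fun j => ?_) hs.le)
  simpa [d] using hk j

lemma exists_cover (n : ℕ) (δ : ℝ) (E : Set (En n)) (a : ℝ≥0∞)
    (ha : dyadicContent n δ E < a) :
    ∃ c : ℕ → ℤ × (Fin n → ℤ), E ⊆ interior (⋃ i, dyadicCube n (c i).1 (c i).2) ∧
      ∑' i, cubeW δ (c i).1 < a := by
  unfold dyadicContent at ha
  simp only [iInf_lt_iff] at ha
  obtain ⟨c, hc, h⟩ := ha
  exact ⟨c, hc, h⟩

lemma content_iUnion_le (n : ℕ) (δ : ℝ) (hδ : 0 < δ) {ι : Type} [Countable ι]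
    (E : ι → Set (En n)) :
    dyadicContent n δ (⋃ i, E i) ≤ ∑' i, dyadicContent n δ (E i) := by
  refine ENNReal.le_of_forall_pos_le_add fun ε hε hfin => ?_
  obtain ⟨ε', hε', hs⟩ := ENNReal.exists_pos_sum_of_countable
    (ENNReal.coe_ne_zero.2 hε.ne') ι
  have hlt : ∀ i, dyadicContent n δ (E i) < dyadicContent n δ (E i) + ε' i := fun i =>
    ENNReal.lt_add_right (ENNReal.ne_top_of_tsum_ne_top hfin.ne i)
      (ENNReal.coe_ne_zero.2 (hε' i).ne')
  choose c hc hc' using fun i => exists_cover n δ (E i) _ (hlt i)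
  have h1 := content_le_tsum n δ hδ (fun p : ι × ℕ => c p.1 p.2) (⋃ i, E i) (by
    refine iUnion_subset fun i => (hc i).trans (interior_mono ?_)
    exact iUnion_subset fun j => subset_iUnion_of_subset (i, j) subset_rfl)
  refine h1.trans ?_
  rw [ENNReal.tsum_prod']
  refine (ENNReal.tsum_le_tsum fun i => (hc' i).le).trans ?_
  rw [ENNReal.tsum_add]
  exact add_le_add le_rfl hs.le

lemma content_union_le (n : ℕ) (δ : ℝ) (hδ : 0 < δ) (E F : Set (En n)) :
    dyadicContent n δ (E ∪ F) ≤ dyadicContent n δ E + dyadicContent n δ F := by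
  have := content_iUnion_le n δ hδ (fun b : Bool => cond b E F)
  rwa [← union_eq_iUnion, tsum_fintype, Fintype.sum_bool] at this

lemma content_ball_le (n : ℕ) (δ : ℝ) (hδ : 0 < δ) :
    ∃ C : ℝ, 0 < C ∧ ∀ (x : En n) (r : ℝ), 0 < r →
      dyadicContent n δ (ball x r) ≤ ENNReal.ofReal (C * r ^ δ) := by
  refine ⟨3 ^ n * 2 ^ δ, by positivity, fun x r hr => ?_⟩
  obtain ⟨k, hk1, hk2⟩ := exists_mem_Ioc_zpow hr (one_lt_two : (1 : ℝ) < 2)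
  have hp : (0 : ℝ) < 2 ^ (k + 1) := by positivity
  have h1 := content_le_tsum n δ hδ (ι := Fin n → Fin 3)
    (fun s => (k + 1, fun i => ⌊x i / 2 ^ (k + 1)⌋ + ((s i : ℕ) : ℤ) - 1)) (ball x r) (by
      refine interior_maximal ?_ isOpen_ball
      intro y hy
      rw [mem_iUnion]
      have hex : ∀ i, ∃ s : Fin 3,
          ((⌊x i / 2 ^ (k + 1)⌋ + ((s : ℕ) : ℤ) - 1 : ℤ) : ℝ) * 2 ^ (k + 1) ≤ y i ∧
          y i < (((⌊x i / 2 ^ (k + 1)⌋ + ((s : ℕ) : ℤ) - 1 : ℤ) : ℝ) + 1) * 2 ^ (k + 1) := by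
        intro i
        have hd : |y i - x i| < r := by
          have := PiLp.norm_apply_le (y - x) i
          rw [mem_ball, dist_eq_norm] at hy
          exact lt_of_le_of_lt (by simpa using this) hy
        rw [abs_lt] at hd
        have hyx : ⌊y i / 2 ^ (k + 1)⌋ ≤ ⌊x i / 2 ^ (k + 1)⌋ + 1 := by
          rw [← Int.floor_add_one]
          apply Int.floor_le_floor
          rw [div_add_one hp.ne']
          gcongr
          linarith
        have hxy : ⌊x i / 2 ^ (k + 1)⌋ ≤ ⌊y i / 2 ^ (k + 1)⌋ + 1 := by
          rw [← Int.floor_add_one]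
          apply Int.floor_le_floor
          rw [div_add_one hp.ne']
          gcongr
          linarith
        have hs : ∃ s : Fin 3, ⌊x i / 2 ^ (k + 1)⌋ + ((s : ℕ) : ℤ) - 1 = ⌊y i / 2 ^ (k + 1)⌋ := by
          have : ⌊y i / 2 ^ (k + 1)⌋ = ⌊x i / 2 ^ (k + 1)⌋ - 1 ∨
            ⌊y i / 2 ^ (k + 1)⌋ = ⌊x i / 2 ^ (k + 1)⌋ ∨
            ⌊y i / 2 ^ (k + 1)⌋ = ⌊x i / 2 ^ (k + 1)⌋ + 1 := by omega
          rcases this with h | h | h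
          · exact ⟨0, by rw [h]; simp⟩
          · exact ⟨1, by rw [h]; simp⟩
          · exact ⟨2, by rw [h]; norm_num; ring⟩
        obtain ⟨s, hs⟩ := hs
        refine ⟨s, ?_⟩
        rw [hs, ← le_div_iff₀ hp, ← div_lt_iff₀ hp]
        exact ⟨Int.floor_le _, Int.lt_floor_add_one _⟩
      choose s hs using hex
      exact ⟨s, hs⟩)
  refine h1.trans ?_
  rw [tsum_fintype]
  simp only [Finset.sum_const, nsmul_eq_mul, Finset.card_univ, Fintype.card_fun,
    Fintype.card_fin, cubeW]
  rw [mul_assoc, ENNReal.ofReal_mul (by positivity)]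
  push_cast
  rw [ENNReal.ofReal_pow (by norm_num)]
  refine mul_le_mul' (by simp) (ENNReal.ofReal_le_ofReal ?_)
  rw [← Real.mul_rpow (by norm_num) hr.le]
  refine Real.rpow_le_rpow hp.le ?_ hδ.le
  rw [zpow_add₀ two_ne_zero, zpow_one]
  linarith

lemma cube_subset (n : ℕ) (k : ℤ) (m : Fin n → ℤ) :
    dyadicCube n k m ⊆ closedBall (cubeCorner n k m) ((n + 1) * 2 ^ k) := by
  intro x hx
  have hp : (0 : ℝ) < 2 ^ k := by positivity
  rw [mem_closedBall, EuclideanSpace.dist_eq]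
  apply Real.sqrt_le_iff.2 ⟨by positivity, ?_⟩
  calc ∑ i, dist (x i) (cubeCorner n k m i) ^ 2 ≤ ∑ i : Fin n, ((2 : ℝ) ^ k) ^ 2 := by
        refine Finset.sum_le_sum fun i _ => ?_
        refine pow_le_pow_left₀ dist_nonneg ?_ 2
        have := hx i
        simp only [cubeCorner, Real.dist_eq]
        rw [abs_le]
        constructor <;> linarith [this.1, this.2]
    _ = n * (2 ^ k) ^ 2 := by simp
    _ ≤ ((n + 1) * 2 ^ k) ^ 2 := by
        rw [mul_pow]
        gcongr
        nlinarith [(Nat.cast_nonneg n : (0 : ℝ) ≤ n)]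

lemma content_ball_ge (n : ℕ) (δ : ℝ) (hδ : 0 < δ) (hδn : δ ≤ n) (x : En n) (r : ℝ) (hr : 0 < r) :
    ENNReal.ofReal (r ^ δ) ≤ ENNReal.ofReal (((n : ℝ) + 1) ^ n) * dyadicContent n δ (ball x r) := by
  have hD : (1 : ℝ) ≤ ((n : ℝ) + 1) ^ n := one_le_pow₀ (by simp)
  have key : ∀ c : ℕ → ℤ × (Fin n → ℤ), ball x r ⊆ interior (⋃ i, dyadicCube n (c i).1 (c i).2) →
      ENNReal.ofReal (r ^ δ) ≤ ENNReal.ofReal (((n : ℝ) + 1) ^ n) * ∑' i, cubeW δ (c i).1 := by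
    intro c hc
    by_cases hbig : ∃ i, r ≤ 2 ^ (c i).1
    · obtain ⟨i, hi⟩ := hbig
      calc ENNReal.ofReal (r ^ δ) ≤ 1 * cubeW δ (c i).1 := by
            rw [one_mul]
            exact ENNReal.ofReal_le_ofReal (Real.rpow_le_rpow hr.le hi hδ.le)
        _ ≤ _ := mul_le_mul' (by simpa using hD) (ENNReal.le_tsum i)
    · push Not at hbig
      let v := volume (ball (0 : En n) 1)
      have hv0 : v ≠ 0 := (measure_ball_pos volume _ one_pos).ne'
      have hvt : v ≠ ⊤ := measure_ball_lt_top.ne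
      have h1 : ENNReal.ofReal (r ^ n) * v ≤
          ∑' i, ENNReal.ofReal (((n + 1) * 2 ^ (c i).1) ^ n) * v := by
        calc ENNReal.ofReal (r ^ n) * v = volume (ball x r) := by
              rw [Measure.addHaar_ball_of_pos volume x hr]; simp [v]
          _ ≤ volume (⋃ i, dyadicCube n (c i).1 (c i).2) :=
              measure_mono (hc.trans interior_subset)
          _ ≤ ∑' i, volume (dyadicCube n (c i).1 (c i).2) := measure_iUnion_le _
          _ ≤ _ := by
              refine ENNReal.tsum_le_tsum fun i => (measure_mono (cube_subset n _ _)).trans ?_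
              rw [Measure.addHaar_closedBall volume _ (by positivity)]; simp [v]
      rw [ENNReal.tsum_mul_right, ENNReal.mul_le_mul_iff_left hv0 hvt] at h1
      have h2 : ENNReal.ofReal (r ^ (n - δ)) * ENNReal.ofReal (r ^ δ) ≤
          ENNReal.ofReal (r ^ (n - δ)) *
            (ENNReal.ofReal (((n : ℝ) + 1) ^ n) * ∑' i, cubeW δ (c i).1) := by
        rw [← ENNReal.ofReal_mul (by positivity), ← Real.rpow_add hr, sub_add_cancel,
          Real.rpow_natCast]
        refine h1.trans ?_
        rw [← mul_assoc, ← ENNReal.tsum_mul_left]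
        refine ENNReal.tsum_le_tsum fun i => ?_
        rw [cubeW, ← ENNReal.ofReal_mul (by positivity), ← ENNReal.ofReal_mul (by positivity)]
        refine ENNReal.ofReal_le_ofReal ?_
        have hp : (0 : ℝ) < 2 ^ (c i).1 := by positivity
        have h3 : ((2 : ℝ) ^ (c i).1) ^ n = (2 ^ (c i).1) ^ ((n : ℝ) - δ) * (2 ^ (c i).1) ^ δ := by
          rw [← Real.rpow_add hp, sub_add_cancel, Real.rpow_natCast]
        have h4 : ((2 : ℝ) ^ (c i).1) ^ ((n : ℝ) - δ) ≤ r ^ ((n : ℝ) - δ) :=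
          Real.rpow_le_rpow hp.le (hbig i).le (by linarith)
        rw [mul_pow, h3]
        calc _ ≤ ((n : ℝ) + 1) ^ n * (r ^ ((n : ℝ) - δ) * (2 ^ (c i).1) ^ δ) := by gcongr
          _ = _ := by ring
      rwa [ENNReal.mul_le_mul_iff_right] at h2
      · simpa using Real.rpow_pos_of_pos hr _
      · simp
  unfold dyadicContent
  rw [ENNReal.mul_iInf_of_ne (by simp; positivity) (by simp)]
  refine le_iInf fun c => ?_
  rw [ENNReal.mul_iInf_of_ne (by simp; positivity) (by simp)]
  exact le_iInf fun hc => key c hc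

lemma content_closedBall_le (n : ℕ) (δ : ℝ) (hδ : 0 < δ) (Λ : ℝ) (hΛ : 0 < Λ) :
    ∃ C : ℝ, 0 < C ∧ ∀ (x : En n) (r : ℝ), 0 < r →
      dyadicContent n δ (closedBall x (Λ * r)) ≤ ENNReal.ofReal C * ENNReal.ofReal (r ^ δ) := by
  obtain ⟨C, hC, h⟩ := content_ball_le n δ hδ
  refine ⟨C * (2 * Λ) ^ δ, by positivity, fun x r hr => ?_⟩
  have hpos : 0 < Λ * r := by positivity
  refine (content_mono n δ (closedBall_subset_ball (ε₂ := 2 * Λ * r) (by linarith))).trans ?_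
  refine (h x _ (by positivity)).trans_eq ?_
  rw [← ENNReal.ofReal_mul (by positivity), Real.mul_rpow (by positivity) hr.le, mul_assoc]

lemma content_doubling (n : ℕ) (δ : ℝ) (hδ : 0 < δ) (hδn : δ ≤ n) (Λ : ℝ) (hΛ : 0 < Λ) :
    ∃ C : ℝ, 0 < C ∧ ∀ (x : En n) (r : ℝ), 0 < r →
      dyadicContent n δ (closedBall x (Λ * r)) ≤ ENNReal.ofReal C * dyadicContent n δ (ball x r) := by
  obtain ⟨C, hC, h⟩ := content_closedBall_le n δ hδ Λ hΛ
  refine ⟨C * ((n : ℝ) + 1) ^ n, by positivity, fun x r hr => (h x r hr).trans ?_⟩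
  rw [ENNReal.ofReal_mul hC.le, mul_assoc]
  exact mul_le_mul' le_rfl (content_ball_ge n δ hδ hδn x r hr)

lemma lint_upper (h : ℝ → ℝ≥0∞) (hh : Antitone h) (T : ℝ) (hT : 0 < T) (a : ℝ≥0∞)
    (ha : ∀ t, h t ≤ a) :
    ∫⁻ t in Ioi (0 : ℝ), h t ≤
      ENNReal.ofReal T * a + ∑' k : ℕ, ENNReal.ofReal (T * 2 ^ k) * h (T * 2 ^ k) := by
  have hsub : Ioi (0 : ℝ) ⊆ Ioc 0 T ∪ ⋃ k : ℕ, Ico (T * 2 ^ k) (T * 2 ^ (k + 1)) := by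
    intro t ht
    rcases le_or_gt t T with h1 | h1
    · exact Or.inl ⟨ht, h1⟩
    · right
      rw [mem_iUnion]
      obtain ⟨k, hk1, hk2⟩ := exists_nat_pow_near (x := t / T) (y := 2)
        (by rw [le_div_iff₀ hT]; linarith) one_lt_two
      rw [le_div_iff₀ hT] at hk1
      rw [div_lt_iff₀ hT] at hk2
      exact ⟨k, by linarith, by linarith⟩
  refine (lintegral_mono_set hsub).trans ((lintegral_union_le _ _ _).trans (add_le_add ?_ ?_))
  · calc ∫⁻ t in Ioc 0 T, h t ≤ ∫⁻ t in Ioc 0 T, a := lintegral_mono fun t => ha t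
      _ = _ := by simp [mul_comm]
  · refine (lintegral_iUnion_le _ _).trans (ENNReal.tsum_le_tsum fun k => ?_)
    calc ∫⁻ t in Ico (T * 2 ^ k) (T * 2 ^ (k + 1)), h t
        ≤ ∫⁻ t in Ico (T * 2 ^ k) (T * 2 ^ (k + 1)), h (T * 2 ^ k) :=
          setLIntegral_mono' measurableSet_Ico fun t ht => hh ht.1
      _ = _ := by
          rw [setLIntegral_const, Real.volume_Ico, mul_comm]
          congr 2
          ring

lemma lint_lower (h : ℝ → ℝ≥0∞) (hh : Antitone h) (T : ℝ) (hT : 0 < T) :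
    ∑' k : ℕ, ENNReal.ofReal (T * 2 ^ k) * h (T * 2 ^ k) ≤ 2 * ∫⁻ t in Ioi (0 : ℝ), h t := by
  let b : ℕ → ℝ := fun k => T * 2 ^ k / 2
  have hb : Monotone b := by
    intro i j hij
    simp only [b]
    gcongr
    norm_num
  have hdisj : Pairwise (Function.onFun Disjoint fun k : ℕ => Ioc (b k) (b (k + 1))) := by
    simpa using hb.pairwise_disjoint_on_Ioc_succ
  have h1 : ∑' k : ℕ, ∫⁻ t in Ioc (b k) (b (k + 1)), h t ≤ ∫⁻ t in Ioi (0 : ℝ), h t := by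
    rw [← lintegral_iUnion (fun k => measurableSet_Ioc) hdisj]
    refine lintegral_mono_set (iUnion_subset fun k t ht => ?_)
    have : 0 < b k := by positivity
    exact this.trans ht.1
  refine le_trans ?_ (mul_le_mul' le_rfl h1)
  rw [← ENNReal.tsum_mul_left]
  refine ENNReal.tsum_le_tsum fun k => ?_
  have hbk : b (k + 1) = T * 2 ^ k := by simp only [b]; ring
  calc ENNReal.ofReal (T * 2 ^ k) * h (T * 2 ^ k)
      = 2 * ∫⁻ t in Ioc (b k) (b (k + 1)), h (T * 2 ^ k) := by
        rw [setLIntegral_const, Real.volume_Ioc, hbk]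
        have : T * 2 ^ k - b k = T * 2 ^ k / 2 := by simp only [b]; ring
        rw [this, mul_comm (h _), ← mul_assoc]
        congr 1
        rw [show (2 : ℝ≥0∞) = ENNReal.ofReal 2 by simp, ← ENNReal.ofReal_mul (by norm_num)]
        congr 1
        ring
    _ ≤ _ := by
        refine mul_le_mul' le_rfl (setLIntegral_mono' measurableSet_Ioc fun t ht => hh ?_)
        rw [← hbk]
        exact ht.2

lemma lint_cheb (h : ℝ → ℝ≥0∞) (hh : Antitone h) (T : ℝ) :
    ENNReal.ofReal T * h T ≤ ∫⁻ t in Ioi (0 : ℝ), h t := by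
  calc ENNReal.ofReal T * h T = ∫⁻ t in Ioc 0 T, h T := by simp [mul_comm]
    _ ≤ ∫⁻ t in Ioc 0 T, h t := setLIntegral_mono' measurableSet_Ioc fun t ht => hh ht.2
    _ ≤ _ := lintegral_mono_set fun t ht => ht.1

lemma lint_shift (h h' : ℝ → ℝ≥0∞) (S : ℝ) (hS : 0 ≤ S) (a : ℝ≥0∞)
    (ha : ∀ t, h t ≤ a) (hh : ∀ t, 0 < t → h (t + S) ≤ h' t) :
    ∫⁻ t in Ioi (0 : ℝ), h t ≤ ENNReal.ofReal S * a + ∫⁻ t in Ioi (0 : ℝ), h' t := by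
  have hsub : Ioi (0 : ℝ) ⊆ Ioc 0 S ∪ Ioi S := by
    rw [Ioc_union_Ioi_eq_Ioi hS]
  refine (lintegral_mono_set hsub).trans ((lintegral_union_le _ _ _).trans (add_le_add ?_ ?_))
  · calc ∫⁻ t in Ioc 0 S, h t ≤ ∫⁻ t in Ioc 0 S, a := lintegral_mono fun t => ha t
      _ = _ := by simp [mul_comm]
  · have hmp : MeasurePreserving (fun t : ℝ => t + S) volume volume :=
      measurePreserving_add_right volume S
    have := hmp.setLIntegral_comp_preimage_emb (measurableEmbedding_addRight S) h (Ioi S)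
    rw [← this]
    simp only [preimage_add_const_Ioi, sub_self]
    exact setLIntegral_mono' measurableSet_Ioi fun t ht => hh t ht

lemma dist_antitone (n : ℕ) (δ : ℝ) (Ω : Set (En n)) (g : En n → ℝ≥0∞) :
    Antitone fun t : ℝ => dyadicContent n δ {x | x ∈ Ω ∧ ENNReal.ofReal t < g x} := by
  intro s t hst
  refine content_mono n δ fun x hx => ⟨hx.1, lt_of_le_of_lt (ENNReal.ofReal_le_ofReal hst) hx.2⟩

lemma weak_type (n : ℕ) (δ : ℝ) (hδ : 0 < δ) (hδn : δ ≤ n) :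
    ∃ C : ℝ, 0 < C ∧ ∀ (g : En n → ℝ≥0∞) (T η : ℝ), 0 < T → 0 < η →
      choquetIntegral n δ univ g < ENNReal.ofReal η →
      ENNReal.ofReal T * dyadicContent n δ {x | ∃ r : ℝ, 0 < r ∧ r ≤ 1 ∧
        ENNReal.ofReal (2 * T) * dyadicContent n δ (ball x r) < choquetIntegral n δ (ball x r) g}
      ≤ ENNReal.ofReal C * ENNReal.ofReal η := by
  set D : ℝ := n + 1 with hD
  have hDpos : 0 < D := by positivity
  obtain ⟨C1, hC1, h1⟩ := content_closedBall_le n δ hδ D hDpos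
  obtain ⟨C2, hC2, h2⟩ := content_closedBall_le n δ hδ (1 + D) (by positivity)
  obtain ⟨C3, hC3, h3⟩ := content_doubling n δ hδ hδn (5 * (1 + D)) (by positivity)
  refine ⟨3 * (C2 + C3 * C1), by positivity, fun g T η hT hη hg => ?_⟩
  set h : ℝ → ℝ≥0∞ := fun t => dyadicContent n δ {x | x ∈ univ ∧ ENNReal.ofReal t < g x} with hh
  have hanti : Antitone h := dist_antitone n δ univ g
  have hlow := lint_lower h hanti T hT
  have hgI : ∫⁻ t in Ioi (0 : ℝ), h t < ENNReal.ofReal η := hg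
  -- the weights
  set w : ℕ → ℝ≥0∞ := fun k => ENNReal.ofReal (T * 2 ^ k) with hw
  have hw0 : ∀ k, w k ≠ 0 := fun k => by
    simp only [hw, ne_eq, ENNReal.ofReal_eq_zero, not_le]; positivity
  have hwt : ∀ k, w k ≠ ⊤ := fun k => ENNReal.ofReal_ne_top
  have hTw : ∀ k, ENNReal.ofReal T ≤ w k := fun k => by
    refine ENNReal.ofReal_le_ofReal (le_mul_of_one_le_right hT.le (one_le_pow₀ (by norm_num)))
  have hfin : ∀ k, h (T * 2 ^ k) < ⊤ := by
    intro k
    have : w k * h (T * 2 ^ k) < ⊤ := by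
      refine lt_of_le_of_lt ((ENNReal.le_tsum k).trans hlow) ?_
      exact ENNReal.mul_lt_top (by simp) (hgI.trans ENNReal.ofReal_lt_top)
    exact ENNReal.lt_top_of_mul_ne_top_right this.ne (hw0 k)
  obtain ⟨ε, hε, hεs⟩ := ENNReal.exists_pos_sum_of_countable
    (ENNReal.ofReal_pos.2 hη).ne' ℕ
  have hlt : ∀ k, h (T * 2 ^ k) < h (T * 2 ^ k) + (ε k : ℝ≥0∞) / w k := fun k =>
    ENNReal.lt_add_right (hfin k).ne
      (ENNReal.div_pos (ENNReal.coe_ne_zero.2 (hε k).ne') (hwt k)).ne'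
  choose c hc hcs using fun k => exists_cover n δ _ _ (hlt k)
  set A : ℝ≥0∞ := 3 * ENNReal.ofReal η with hA
  have hsum : ∑' p : ℕ × ℕ, w p.1 * cubeW δ (c p.1 p.2).1 ≤ A := by
    rw [ENNReal.tsum_prod']
    calc ∑' k, ∑' i, w k * cubeW δ (c k i).1 ≤ ∑' k, (w k * h (T * 2 ^ k) + ε k) := by
          refine ENNReal.tsum_le_tsum fun k => ?_
          rw [ENNReal.tsum_mul_left]
          refine (mul_le_mul' le_rfl (hcs k).le).trans ?_
          rw [mul_add, ENNReal.mul_div_cancel (hw0 k) (hwt k)]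
      _ = ∑' k, w k * h (T * 2 ^ k) + ∑' k, (ε k : ℝ≥0∞) := ENNReal.tsum_add
      _ ≤ 2 * ENNReal.ofReal η + ENNReal.ofReal η :=
          add_le_add (hlow.trans (mul_le_mul' le_rfl hgI.le)) hεs.le
      _ = A := by rw [hA]; ring
  set z : ℕ × ℕ → En n := fun p => cubeCorner n (c p.1 p.2).1 (c p.1 p.2).2 with hz
  let μ : Measure (En n) := Measure.sum fun p : ℕ × ℕ =>
    (w p.1 * cubeW δ (c p.1 p.2).1) • Measure.dirac (z p)
  have hμ : ∀ s, MeasurableSet s → μ s =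
      ∑' p : ℕ × ℕ, (w p.1 * cubeW δ (c p.1 p.2).1) * s.indicator 1 (z p) := by
    intro s hs
    simp only [μ]
    rw [Measure.sum_apply _ hs]
    refine tsum_congr fun p => ?_
    rw [Measure.smul_apply, Measure.dirac_apply' _ hs, smul_eq_mul]
  have hμA : μ univ ≤ A := by
    rw [hμ _ MeasurableSet.univ]
    simpa using hsum
  -- first bad set
  set U : Set (En n) := ⋃ p : ℕ × ℕ, closedBall (z p) ((1 + D) * 2 ^ (c p.1 p.2).1) with hU
  have hHU : ENNReal.ofReal T * dyadicContent n δ U ≤ ENNReal.ofReal C2 * A := by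
    calc ENNReal.ofReal T * dyadicContent n δ U
        ≤ ENNReal.ofReal T * ∑' p : ℕ × ℕ, ENNReal.ofReal C2 * cubeW δ (c p.1 p.2).1 := by
          refine mul_le_mul' le_rfl ((content_iUnion_le n δ hδ _).trans ?_)
          exact ENNReal.tsum_le_tsum fun p => h2 _ _ (by positivity)
      _ = ENNReal.ofReal C2 * ∑' p : ℕ × ℕ, ENNReal.ofReal T * cubeW δ (c p.1 p.2).1 := by
          rw [ENNReal.tsum_mul_left, ENNReal.tsum_mul_left]; ring
      _ ≤ ENNReal.ofReal C2 * ∑' p : ℕ × ℕ, w p.1 * cubeW δ (c p.1 p.2).1 := by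
          refine mul_le_mul' le_rfl (ENNReal.tsum_le_tsum fun p => mul_le_mul' (hTw _) le_rfl)
      _ ≤ _ := mul_le_mul' le_rfl hsum
  -- second bad set
  set V : Set (En n) := {x | ∃ r : ℝ, 0 < r ∧ r ≤ 1 ∧
    ENNReal.ofReal T * dyadicContent n δ (ball x r) <
      ENNReal.ofReal C1 * μ (closedBall x ((1 + D) * r))} with hV
  have hHV : ENNReal.ofReal T * dyadicContent n δ V ≤ ENNReal.ofReal (C3 * C1) * A := by
    have hex : ∀ x : V, ∃ r : ℝ, 0 < r ∧ r ≤ 1 ∧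
      ENNReal.ofReal T * dyadicContent n δ (ball (x : En n) r) <
        ENNReal.ofReal C1 * μ (closedBall (x : En n) ((1 + D) * r)) := fun x => x.2
    choose ρ hρ0 hρ1 hρ using hex
    obtain ⟨u, -, hdis, hcov⟩ := Vitali.exists_disjoint_subfamily_covering_enlargement_closedBall
      (univ : Set V) (fun x => (x : En n)) (fun x => (1 + D) * ρ x) (1 + D)
      (fun x _ => mul_le_of_le_one_right (by positivity) (hρ1 x)) 5 (by norm_num)
    have hcount : u.Countable := hdis.countable_of_nonempty_interior fun x _ =>
      ⟨x, ball_subset_interior_closedBall (mem_ball_self (mul_pos (by positivity) (hρ0 x)))⟩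
    have : Countable u := hcount.to_subtype
    have hVs : V ⊆ ⋃ b : u, closedBall ((b : V) : En n) (5 * (1 + D) * ρ b) := by
      intro x hx
      obtain ⟨b, hb, hsub⟩ := hcov ⟨x, hx⟩ (mem_univ _)
      rw [mem_iUnion]
      refine ⟨⟨b, hb⟩, ?_⟩
      rw [mul_assoc]
      exact hsub (mem_closedBall_self (mul_nonneg (by positivity) (hρ0 _).le))
    calc ENNReal.ofReal T * dyadicContent n δ V
        ≤ ENNReal.ofReal T * ∑' b : u, ENNReal.ofReal C3 *
            dyadicContent n δ (ball ((b : V) : En n) (ρ b)) := by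
          refine mul_le_mul' le_rfl ((content_mono n δ hVs).trans
            ((content_iUnion_le n δ hδ _).trans ?_))
          exact ENNReal.tsum_le_tsum fun b => h3 _ _ (hρ0 _)
      _ = ENNReal.ofReal C3 * ∑' b : u, ENNReal.ofReal T *
            dyadicContent n δ (ball ((b : V) : En n) (ρ b)) := by
          rw [ENNReal.tsum_mul_left, ENNReal.tsum_mul_left]; ring
      _ ≤ ENNReal.ofReal C3 * ∑' b : u, ENNReal.ofReal C1 *
            μ (closedBall ((b : V) : En n) ((1 + D) * ρ b)) :=
          mul_le_mul' le_rfl (ENNReal.tsum_le_tsum fun b => (hρ b).le)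
      _ = ENNReal.ofReal (C3 * C1) * ∑' b : u,
            μ (closedBall ((b : V) : En n) ((1 + D) * ρ b)) := by
          rw [ENNReal.tsum_mul_left, ENNReal.ofReal_mul hC3.le, mul_assoc]
      _ ≤ _ := by
          refine mul_le_mul' le_rfl (le_trans ?_ hμA)
          refine (tsum_meas_le_meas_iUnion_of_disjoint μ
            (As := fun b : u => closedBall ((b : V) : En n) ((1 + D) * ρ b))
            (fun b => isClosed_closedBall.measurableSet)
            (hdis.subtype _ _)).trans (measure_mono (subset_univ _))
  -- off the bad sets
  have hsub : {x | ∃ r : ℝ, 0 < r ∧ r ≤ 1 ∧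
      ENNReal.ofReal (2 * T) * dyadicContent n δ (ball x r) < choquetIntegral n δ (ball x r) g}
      ⊆ U ∪ V := by
    intro x hx
    by_contra hxUV
    rw [mem_union, not_or] at hxUV
    obtain ⟨hxU, hxV⟩ := hxUV
    obtain ⟨r, hr0, hr1, hr⟩ := hx
    refine absurd hr (not_lt.2 ?_)
    have hxV' : ENNReal.ofReal C1 * μ (closedBall x ((1 + D) * r)) ≤
        ENNReal.ofReal T * dyadicContent n δ (ball x r) := by
      by_contra hcon
      exact hxV ⟨r, hr0, hr1, not_le.1 hcon⟩
    have hup := lint_upper _ (dist_antitone n δ (ball x r) g) T hT (dyadicContent n δ (ball x r))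
      (fun t => content_mono n δ fun y hy => hy.1)
    refine hup.trans ?_
    rw [two_mul, ENNReal.ofReal_add hT.le hT.le, add_mul]
    refine add_le_add le_rfl (le_trans ?_ hxV')
    rw [hμ _ isClosed_closedBall.measurableSet, ENNReal.tsum_prod', ← ENNReal.tsum_mul_left]
    refine ENNReal.tsum_le_tsum fun k => ?_
    have hlev : dyadicContent n δ {y | y ∈ ball x r ∧ ENNReal.ofReal (T * 2 ^ k) < g y} ≤
        ∑' i, ENNReal.ofReal C1 * cubeW δ (c k i).1 *
          (closedBall x ((1 + D) * r)).indicator 1 (z (k, i)) := by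
      have hs : {y | y ∈ ball x r ∧ ENNReal.ofReal (T * 2 ^ k) < g y} ⊆
          ⋃ i, (ball x r ∩ dyadicCube n (c k i).1 (c k i).2) := by
        rw [← inter_iUnion]
        exact fun y hy => ⟨hy.1, interior_subset (hc k ⟨mem_univ _, hy.2⟩)⟩
      refine (content_mono n δ hs).trans ((content_iUnion_le n δ hδ _).trans ?_)
      refine ENNReal.tsum_le_tsum fun i => ?_
      rcases eq_empty_or_nonempty (ball x r ∩ dyadicCube n (c k i).1 (c k i).2) with he | ⟨y, hy1, hy2⟩
      · rw [he]
        have h0 := content_iUnion_le n δ hδ (fun e : Empty => (∅ : Set (En n)))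
        have h0' : dyadicContent n δ (∅ : Set (En n)) ≤ 0 := by simpa using h0
        exact h0'.trans zero_le
      · have hyz := cube_subset n _ _ hy2
        have hmem : z (k, i) ∈ closedBall x ((1 + D) * r) := by
          have hxz : ¬ dist x (z (k, i)) ≤ (1 + D) * 2 ^ (c k i).1 := fun hcon =>
            hxU (mem_iUnion.2 ⟨(k, i), hcon⟩)
          rw [mem_closedBall] at hyz ⊢
          rw [mem_ball] at hy1
          have htri : dist x (z (k, i)) ≤ dist y x + dist y (z (k, i)) := by
            rw [dist_comm y x]; exact dist_triangle _ _ _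
          have hyz' : dist y (z (k, i)) ≤ D * 2 ^ (c k i).1 := hyz
          have hlr : (2 : ℝ) ^ (c k i).1 ≤ r := by
            by_contra hcon
            push Not at hcon
            apply hxz
            linarith
          rw [dist_comm]
          have := mul_le_mul_of_nonneg_left hlr hDpos.le
          linarith
        rw [indicator_of_mem hmem, Pi.one_apply, mul_one]
        exact (content_mono n δ (inter_subset_right.trans (cube_subset n _ _))).trans
          (h1 _ _ (by positivity))
    refine (mul_le_mul' le_rfl hlev).trans_eq ?_
    rw [← ENNReal.tsum_mul_left, ← ENNReal.tsum_mul_left]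
    refine tsum_congr fun i => ?_
    simp only [hw]
    ring
  calc _ ≤ ENNReal.ofReal T * (dyadicContent n δ U + dyadicContent n δ V) :=
        mul_le_mul' le_rfl ((content_mono n δ hsub).trans (content_union_le n δ hδ U V))
    _ ≤ ENNReal.ofReal C2 * A + ENNReal.ofReal (C3 * C1) * A := by
        rw [mul_add]; exact add_le_add hHU hHV
    _ = _ := by
        rw [ENNReal.ofReal_mul (by norm_num : (0 : ℝ) ≤ 3),
          ENNReal.ofReal_add hC2.le (by positivity), hA]
        rw [show ENNReal.ofReal 3 = 3 by simp]
        ring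

/-- if `f ∈ nL¹(ℝⁿ, H̃^δ_∞)` is an `nL¹`-limit of continuous functions,
then `H̃^δ_∞`-almost every point is a Lebesgue point: `f^δ_*(x) = 0` a.e. -/
theorem lebesgue_points_of_nL1_limit (n : ℕ) (hn : 1 ≤ n)
    (δ : ℝ) (hδ0 : 0 < δ) (hδn : δ ≤ n)
    (f : En n → ℝ) (hf : choquetIntegralAbs n δ univ f < ⊤)
    (hlimit : ∃ φ : ℕ → En n → ℝ, (∀ i, Continuous (φ i)) ∧
      Tendsto (fun i => choquetIntegralAbs n δ univ (fun x => f x - φ i x))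
        atTop (𝓝 0)) :
    ∃ E : Set (En n), dyadicContent n δ E = 0 ∧
      ∀ x ∉ E, lebDev n δ f x = 0 := by

  obtain ⟨φ, hφc, hφ⟩ := hlimit
  obtain ⟨C, hC, hweak⟩ := weak_type n δ hδ0 hδn
  let g : ℕ → En n → ℝ≥0∞ := fun i x => ENNReal.ofReal |f x - φ i x|
  let bad1 : ℕ → ℝ → Set (En n) := fun i T => {x | x ∈ univ ∧ ENNReal.ofReal T < g i x}
  let bad2 : ℕ → ℝ → Set (En n) := fun i T => {x | ∃ r : ℝ, 0 < r ∧ r ≤ 1 ∧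
        ENNReal.ofReal (2 * T) * dyadicContent n δ (ball x r) < choquetIntegral n δ (ball x r) (g i)}
  let Tm : ℕ → ℝ := fun m => 1 / ((m : ℝ) + 1)
  have hTm : ∀ m, 0 < Tm m := fun m => by positivity
  refine ⟨⋃ m : ℕ, ⋂ i : ℕ, (bad1 i (Tm m) ∪ bad2 i (Tm m)), ?_, ?_⟩
  · refine le_antisymm ((content_iUnion_le n δ hδ0 _).trans ?_) zero_le
    rw [nonpos_iff_eq_zero, ENNReal.tsum_eq_zero]
    intro m
    have hT := hTm m
    have hbound : ∀ η : ℝ, 0 < η → ENNReal.ofReal (Tm m) *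
        dyadicContent n δ (⋂ i : ℕ, (bad1 i (Tm m) ∪ bad2 i (Tm m))) ≤
        ENNReal.ofReal ((1 + C) * η) := by
      intro η hη
      obtain ⟨i, hi⟩ := (hφ.eventually (gt_mem_nhds (ENNReal.ofReal_pos.2 hη))).exists
      have hi' : choquetIntegral n δ univ (g i) < ENNReal.ofReal η := hi
      calc _ ≤ ENNReal.ofReal (Tm m) * (dyadicContent n δ (bad1 i (Tm m)) +
              dyadicContent n δ (bad2 i (Tm m))) :=
            mul_le_mul' le_rfl ((content_mono n δ (iInter_subset _ i)).trans
              (content_union_le n δ hδ0 _ _))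
        _ ≤ ENNReal.ofReal η + ENNReal.ofReal C * ENNReal.ofReal η := by
            rw [mul_add]
            refine add_le_add ?_ (hweak (g i) (Tm m) η hT hη hi')
            exact (lint_cheb _ (dist_antitone n δ univ (g i)) (Tm m)).trans hi'.le
        _ = _ := by
            rw [ENNReal.ofReal_mul (by positivity), ENNReal.ofReal_add zero_le_one hC.le,
              ENNReal.ofReal_one]
            ring
    have hz : ENNReal.ofReal (Tm m) *
        dyadicContent n δ (⋂ i : ℕ, (bad1 i (Tm m) ∪ bad2 i (Tm m))) ≤ 0 := by
      refine ENNReal.le_of_forall_pos_le_add fun ε hε _ => ?_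
      have hε' : (0 : ℝ) < ε := hε
      refine (hbound ((ε : ℝ) / (1 + C)) (by positivity)).trans_eq ?_
      rw [mul_div_cancel₀ _ (by positivity), zero_add, ENNReal.ofReal_coe_nnreal]
    rw [nonpos_iff_eq_zero, mul_eq_zero] at hz
    rcases hz with hz | hz
    · exact absurd hz (ENNReal.ofReal_pos.2 hT).ne'
    · exact hz
  · intro x hx
    simp only [mem_iUnion, mem_iInter, not_exists, not_forall] at hx
    have hle : ∀ m, lebDev n δ f x ≤ ENNReal.ofReal (4 * Tm m) := by
      intro m
      have hT := hTm m
      obtain ⟨i, hi⟩ := hx m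
      rw [mem_union, not_or] at hi
      obtain ⟨hi1, hi2⟩ := hi
      have hgx : |f x - φ i x| ≤ Tm m := by
        by_contra hcon
        exact hi1 ⟨mem_univ _, (ENNReal.ofReal_lt_ofReal_iff_of_nonneg hT.le).2 (not_le.1 hcon)⟩
      obtain ⟨d, hd, hcont⟩ := Metric.continuousAt_iff.1
        ((hφc i).continuousAt (x := x)) (Tm m) hT
      unfold lebDev
      refine limsup_le_of_le (by isBoundedDefault) ?_
      have hev : Ioo (0 : ℝ) (min d 1) ∈ 𝓝[>] (0 : ℝ) := Ioo_mem_nhdsGT (by positivity)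
      filter_upwards [hev] with r hr
      have hrd : r < d := hr.2.trans_le (min_le_left _ _)
      have hr1 : r ≤ 1 := (hr.2.trans_le (min_le_right _ _)).le
      have havg : choquetIntegral n δ (ball x r) (g i) ≤
          ENNReal.ofReal (2 * Tm m) * dyadicContent n δ (ball x r) := by
        by_contra hcon
        exact hi2 ⟨r, hr.1, hr1, not_le.1 hcon⟩
      refine ENNReal.div_le_of_le_mul ?_
      have hsh := lint_shift
        (fun t => dyadicContent n δ {y | y ∈ ball x r ∧ ENNReal.ofReal t < ENNReal.ofReal |f y - f x|})
        (fun t => dyadicContent n δ {y | y ∈ ball x r ∧ ENNReal.ofReal t < g i y})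
        (2 * Tm m) (by positivity) (dyadicContent n δ (ball x r))
        (fun t => content_mono n δ fun y hy => hy.1) (fun t ht => by
          refine content_mono n δ fun y hy => ⟨hy.1, ?_⟩
          have h1 := (ENNReal.ofReal_lt_ofReal_iff'.1 hy.2)
          have h2 : |φ i y - φ i x| < Tm m := by
            have := hcont ((mem_ball.1 hy.1).trans hrd)
            rwa [Real.dist_eq] at this
          have h3 : |f y - f x| ≤ |f y - φ i y| + |φ i y - φ i x| + |f x - φ i x| := by
            have e : f y - f x = (f y - φ i y) + (φ i y - φ i x) - (f x - φ i x) := by ring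
            rw [e]
            exact (abs_sub _ _).trans (add_le_add (abs_add_le _ _) le_rfl)
          have h5 : t < |f y - φ i y| := by linarith [h1.1]
          exact ENNReal.ofReal_lt_ofReal_iff'.2 ⟨h5, ht.trans h5⟩)
      refine hsh.trans ?_
      refine (add_le_add le_rfl havg).trans_eq ?_
      rw [← add_mul, ← ENNReal.ofReal_add (by positivity) (by positivity)]
      congr 2
      ring
    have hlim : Tendsto (fun m => ENNReal.ofReal (4 * Tm m)) atTop (𝓝 0) := by
      have h1 : Tendsto Tm atTop (𝓝 0) := tendsto_one_div_add_atTop_nhds_zero_nat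
      have h2 := ENNReal.tendsto_ofReal (h1.const_mul 4)
      simpa using h2
    exact le_antisymm (ge_of_tendsto' hlim hle) zero_le
end
end

section
/- Let n ≥ 2 and δ ∈ (0, n−1], and let B = {x ∈ ℝⁿ : |x| < 1} be the open unit ball with characteristic function χ_B. Then χ_B ∈ nL¹(ℝⁿ, H̃^δ_∞) and χ_B is Lebesgue measurable, yet there is a constant c > 0 (depending only on n and δ) such that for every x ∈ ∂B one has χ_B(x) = 0 < c ≤ limsup_{r→0⁺} (1/H̃^δ_∞(B(x,r))) ∫_{B(x,r)} χ_B dH̃^δ_∞; since H̃^δ_∞(∂B) > 0, it follows that χ_B is not an nL¹-limit of continuous functions (in particular, continuous functions are not dense in nL¹(ℝⁿ, H̃^δ_∞)). -/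
open MeasureTheory Set Metric Filter Topology
open scoped ENNReal

noncomputable section

theorem aux_content_le {n : ℕ} {δ : ℝ} {E : Set (En n)} (c : ℕ → ℤ × (Fin n → ℤ))
    (h : E ⊆ interior (⋃ i, dyadicCube n (c i).1 (c i).2)) :
    dyadicContent n δ E ≤ ∑' i, ENNReal.ofReal (((2 : ℝ) ^ (c i).1) ^ δ) :=
  iInf₂_le c h

theorem aux_content_mono {n : ℕ} {δ : ℝ} {E F : Set (En n)} (h : E ⊆ F) :
    dyadicContent n δ E ≤ dyadicContent n δ F :=
  le_iInf₂ fun c hc => aux_content_le c (h.trans hc)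

theorem aux_scale (δ : ℝ) (k : ℤ) (i : ℕ) :
    ENNReal.ofReal (((2 : ℝ) ^ (k - (i : ℤ))) ^ δ) =
      ENNReal.ofReal (((2 : ℝ) ^ k) ^ δ) * ENNReal.ofReal ((2 : ℝ) ^ (-δ)) ^ i := by
  rw [← ENNReal.ofReal_pow (by positivity), ← ENNReal.ofReal_mul (by positivity)]
  congr 1
  rw [← Real.rpow_intCast, ← Real.rpow_intCast, ← Real.rpow_natCast, ← Real.rpow_mul (by norm_num),
    ← Real.rpow_mul (by norm_num), ← Real.rpow_mul (by norm_num), ← Real.rpow_add (by norm_num)]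
  congr 1
  push_cast
  ring

/-- The geometric constant. -/
def auxS (δ : ℝ) : ℝ≥0∞ := ∑' i : ℕ, ENNReal.ofReal ((2 : ℝ) ^ (-δ)) ^ i

theorem auxS_ne_top {δ : ℝ} (hδ : 0 < δ) : auxS δ ≠ ⊤ := by
  unfold auxS
  rw [ENNReal.tsum_geometric]
  rw [Ne, ENNReal.inv_eq_top, tsub_eq_zero_iff_le, not_le]
  rw [ENNReal.ofReal_lt_one]
  exact Real.rpow_lt_one_of_one_lt_of_neg (by norm_num) (by linarith)

theorem aux_content_empty {n : ℕ} {δ : ℝ} (hδ : 0 < δ) :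
    dyadicContent n δ (∅ : Set (En n)) = 0 := by
  have h1 := ENNReal.tendsto_sum_nat_add (fun i : ℕ => ENNReal.ofReal ((2 : ℝ) ^ (-δ)) ^ i)
    (auxS_ne_top hδ)
  refine le_antisymm (ge_of_tendsto' h1 fun j => ?_) zero_le
  refine (aux_content_le (fun i => (0 - ((i + j : ℕ) : ℤ), 0)) (empty_subset _)).trans ?_
  refine ENNReal.tsum_le_tsum fun i => ?_
  have := aux_scale δ 0 (i + j)
  dsimp only
  rw [this]
  simp

theorem aux_content_ball_le {n : ℕ} {δ : ℝ} (hδ : 0 < δ) (x : En n) {r : ℝ} (hr : 0 < r) :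
    dyadicContent n δ (ball x r) ≤
      ENNReal.ofReal ((2 * r) ^ δ) * ((Fintype.card (Fin n → Fin 3) : ℕ) + auxS δ) := by
  obtain ⟨k', hk1, hk2⟩ := exists_mem_Ioc_zpow hr (one_lt_two (α := ℝ))
  obtain ⟨k, rfl⟩ : ∃ k : ℤ, k' = k - 1 := ⟨k' + 1, by ring⟩
  rw [sub_add_cancel] at hk2
  rw [zpow_sub_one₀ (by norm_num)] at hk1
  have hkr : (2 : ℝ) ^ k ≤ 2 * r := by linarith
  have hkpos : (0 : ℝ) < 2 ^ k := by positivity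
  set N := Fintype.card (Fin n → Fin 3) with hN
  let e := Fintype.equivFin (Fin n → Fin 3)
  let c : ℕ → ℤ × (Fin n → ℤ) := fun i =>
    if h : i < N then (k, fun j => ⌊x j / 2 ^ k⌋ + ((e.symm ⟨i, h⟩ j : ℕ) : ℤ) - 1)
    else (k - (i : ℤ), 0)
  have hcov : ball x r ⊆ interior (⋃ i, dyadicCube n (c i).1 (c i).2) := by
    refine interior_maximal ?_ isOpen_ball
    intro y hy
    have hyj : ∀ j, |y j - x j| < 2 ^ k := fun j => by
      have h1 : ‖(y - x) j‖ ≤ ‖y - x‖ := PiLp.norm_apply_le _ _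
      rw [mem_ball, dist_eq_norm] at hy
      have h2 : ‖(y - x) j‖ = |y j - x j| := rfl
      linarith
    have hex : ∀ j, ∃ a : Fin 3, ((⌊x j / 2 ^ k⌋ + ((a : ℕ) : ℤ) - 1 : ℤ) : ℝ) * 2 ^ k ≤ y j ∧
        y j < (((⌊x j / 2 ^ k⌋ + ((a : ℕ) : ℤ) - 1 : ℤ) : ℝ) + 1) * 2 ^ k := by
      intro j
      have h := abs_lt.1 (hyj j)
      have f1 : (⌊x j / 2 ^ k⌋ : ℝ) * 2 ^ k ≤ x j := by
        rw [← le_div_iff₀ hkpos]; exact Int.floor_le _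
      have f2 : x j < ((⌊x j / 2 ^ k⌋ : ℝ) + 1) * 2 ^ k := by
        rw [← div_lt_iff₀ hkpos]; exact Int.lt_floor_add_one _
      generalize (⌊x j / 2 ^ k⌋ : ℤ) = q at *
      by_cases a1 : y j < q * 2 ^ k
      · refine ⟨0, ?_, ?_⟩ <;> push_cast <;> norm_num <;> nlinarith
      · by_cases a2 : y j < (q + 1) * 2 ^ k
        · refine ⟨1, ?_, ?_⟩ <;> push_cast <;> norm_num <;> nlinarith
        · refine ⟨2, ?_, ?_⟩ <;> push_cast <;> norm_num <;> nlinarith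
    choose a ha using hex
    refine mem_iUnion.2 ⟨(e a : ℕ), ?_⟩
    have hlt : (e a : ℕ) < N := (e a).2
    have hc : c (e a) = (k, fun j => ⌊x j / 2 ^ k⌋ + ((a j : ℕ) : ℤ) - 1) := by
      simp only [c, dif_pos hlt]
      simp
    rw [hc]
    exact ha
  refine (aux_content_le c hcov).trans ?_
  have hbound : ∀ i, ENNReal.ofReal (((2 : ℝ) ^ (c i).1) ^ δ) ≤
      (if i < N then ENNReal.ofReal (((2 : ℝ) ^ k) ^ δ) else 0) +
      ENNReal.ofReal (((2 : ℝ) ^ k) ^ δ) * ENNReal.ofReal ((2 : ℝ) ^ (-δ)) ^ i := by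
    intro i
    by_cases h : i < N
    · simp [c, h]
    · have : (c i).1 = k - (i : ℤ) := by simp [c, h]
      rw [this, aux_scale, if_neg h, zero_add]
  refine (ENNReal.tsum_le_tsum hbound).trans ?_
  rw [ENNReal.tsum_add, ENNReal.tsum_mul_left, mul_add]
  have hmono : ENNReal.ofReal (((2 : ℝ) ^ k) ^ δ) ≤ ENNReal.ofReal ((2 * r) ^ δ) :=
    ENNReal.ofReal_le_ofReal (Real.rpow_le_rpow hkpos.le hkr hδ.le)
  refine add_le_add ?_ (mul_le_mul_left hmono _)
  rw [tsum_eq_sum (s := Finset.range N) (fun i hi => if_neg (by simpa using hi))]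
  rw [Finset.sum_congr rfl (fun i hi => if_pos (Finset.mem_range.1 hi))]
  rw [Finset.sum_const, Finset.card_range, nsmul_eq_mul, mul_comm]
  exact mul_le_mul_left hmono _

/-- Projection forgetting the last coordinate. -/
def auxProj {m : ℕ} (x : En (m + 1)) : Fin m → ℝ := fun j => x j.castSucc

theorem aux_content_ge {m : ℕ} {δ : ℝ} (hδ : 0 < δ) (hδm : δ ≤ m) {E : Set (En (m + 1))}
    {y0 : Fin m → ℝ} {a : ℝ} (ha : 0 < a) (h : closedBall y0 a ⊆ auxProj '' E) :
    ENNReal.ofReal (a ^ δ) ≤ dyadicContent (m + 1) δ E := by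
  refine le_iInf₂ fun c hc => ?_
  by_cases hbig : ∃ i, a ≤ (2 : ℝ) ^ (c i).1
  · obtain ⟨i, hi⟩ := hbig
    refine le_trans ?_ (ENNReal.le_tsum i)
    exact ENNReal.ofReal_le_ofReal (Real.rpow_le_rpow ha.le hi hδ.le)
  push Not at hbig
  have hsub : closedBall y0 a ⊆ ⋃ i, (Set.pi univ fun j : Fin m =>
      Ico (((c i).2 j.castSucc : ℝ) * 2 ^ (c i).1)
        ((((c i).2 j.castSucc : ℝ) + 1) * 2 ^ (c i).1)) := by
    intro y hy
    obtain ⟨x, hx, rfl⟩ := h hy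
    obtain ⟨i, hi⟩ := mem_iUnion.1 (interior_subset (hc hx))
    refine mem_iUnion.2 ⟨i, fun j _ => ?_⟩
    exact hi j.castSucc
  have hvol := (measure_mono (μ := volume) hsub).trans (measure_iUnion_le _)
  rw [Real.volume_pi_closedBall _ ha.le] at hvol
  simp only [Real.volume_pi_Ico] at hvol
  have hq : ∀ i, (∏ j : Fin m, ENNReal.ofReal ((((c i).2 j.castSucc : ℝ) + 1) * 2 ^ (c i).1 -
      ((c i).2 j.castSucc : ℝ) * 2 ^ (c i).1)) = ENNReal.ofReal (((2 : ℝ) ^ (c i).1) ^ m) := by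
    intro i
    have : ∀ j : Fin m, (((c i).2 j.castSucc : ℝ) + 1) * 2 ^ (c i).1 -
      ((c i).2 j.castSucc : ℝ) * 2 ^ (c i).1 = 2 ^ (c i).1 := fun j => by ring
    simp only [this, Finset.prod_const, Finset.card_univ, Fintype.card_fin]
    rw [ENNReal.ofReal_pow (by positivity)]
  simp only [hq] at hvol
  have key : ∀ i, ENNReal.ofReal (a ^ (δ - m)) * ENNReal.ofReal (((2 : ℝ) ^ (c i).1) ^ m) ≤
      ENNReal.ofReal (((2 : ℝ) ^ (c i).1) ^ δ) := by
    intro i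
    have hp : (0 : ℝ) < 2 ^ (c i).1 := by positivity
    rw [← ENNReal.ofReal_mul (by positivity)]
    refine ENNReal.ofReal_le_ofReal ?_
    have h1 : a ^ (δ - m) ≤ ((2 : ℝ) ^ (c i).1) ^ (δ - m) :=
      Real.rpow_le_rpow_of_nonpos hp (hbig i).le (by linarith)
    calc a ^ (δ - m) * ((2 : ℝ) ^ (c i).1) ^ m
        ≤ ((2 : ℝ) ^ (c i).1) ^ (δ - m) * ((2 : ℝ) ^ (c i).1) ^ m := by gcongr
      _ = _ := by rw [← Real.rpow_natCast _ m, ← Real.rpow_add hp, sub_add_cancel]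
  refine le_trans ?_ (ENNReal.tsum_le_tsum key)
  rw [ENNReal.tsum_mul_left]
  refine le_trans ?_ (mul_le_mul_right hvol _)
  rw [← ENNReal.ofReal_mul (by positivity)]
  refine ENNReal.ofReal_le_ofReal ?_
  simp only [Fintype.card_fin]
  calc a ^ δ = a ^ (δ - m) * a ^ m := by
        rw [← Real.rpow_natCast _ m, ← Real.rpow_add ha, sub_add_cancel]
    _ ≤ _ := by
        gcongr
        linarith

/-- Point with given projection and last coordinate. -/
def auxPt {m : ℕ} (y : Fin m → ℝ) (t : ℝ) : En (m + 1) := WithLp.toLp 2 (Fin.snoc y t)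

theorem auxProj_pt {m : ℕ} (y : Fin m → ℝ) (t : ℝ) : auxProj (auxPt y t) = y := by
  funext j; simp [auxProj, auxPt]

theorem aux_norm_pt {m : ℕ} (y : Fin m → ℝ) (t : ℝ) :
    ‖auxPt y t‖ ^ 2 = ∑ j, y j ^ 2 + t ^ 2 := by
  rw [EuclideanSpace.norm_sq_eq, Fin.sum_univ_castSucc]
  simp [auxPt]

theorem aux_sum_lt {m : ℕ} {r : ℝ} (hr : 0 < r) (v : Fin m → ℝ)
    (hv : ∀ j, |v j| ≤ r / (m + 1)) : ∑ j, v j ^ 2 < r ^ 2 := by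
  have hm : (0 : ℝ) < m + 1 := by positivity
  have h1 : ∑ j, v j ^ 2 ≤ ∑ j : Fin m, (r / (m + 1)) ^ 2 :=
    Finset.sum_le_sum fun j _ => by
      rw [← sq_abs]; exact pow_le_pow_left₀ (abs_nonneg _) (hv j) 2
  refine h1.trans_lt ?_
  rw [Finset.sum_const, Finset.card_univ, Fintype.card_fin, nsmul_eq_mul, div_pow, mul_div_assoc',
    div_lt_iff₀ (by positivity)]
  have : (0 : ℝ) ≤ m := by positivity
  nlinarith [sq_nonneg r, pow_pos hr 2, mul_nonneg this (sq_nonneg r),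
    mul_nonneg (mul_nonneg this this) (sq_nonneg r)]

theorem aux_content_ball_ge {m : ℕ} {δ : ℝ} (hδ : 0 < δ) (hδm : δ ≤ m) (x : En (m + 1)) {r : ℝ}
    (hr : 0 < r) :
    ENNReal.ofReal ((r / (m + 1)) ^ δ) ≤ dyadicContent (m + 1) δ (ball x r) := by
  have hm : (0 : ℝ) < m + 1 := by positivity
  refine aux_content_ge hδ hδm (y0 := auxProj x) (div_pos hr hm) ?_
  intro y hy
  refine ⟨auxPt y (x (Fin.last m)), ?_, auxProj_pt _ _⟩
  rw [mem_ball, dist_eq_norm]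
  have : auxPt y (x (Fin.last m)) - x = auxPt (y - auxProj x) 0 := by
    ext j
    refine Fin.lastCases ?_ (fun j => ?_) j <;> simp [auxPt, auxProj]
  rw [this]
  refine lt_of_pow_lt_pow_left₀ 2 hr.le ?_
  rw [aux_norm_pt]
  have := aux_sum_lt (m := m) hr (y - auxProj x) (fun j => by
    have h1 := dist_le_pi_dist y (auxProj x) j
    rw [Real.dist_eq] at h1
    exact h1.trans (mem_closedBall.1 hy))
  simpa using this

theorem aux_integral_ind {n : ℕ} {δ : ℝ} (hδ : 0 < δ) (Ω B : Set (En n)) :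
    choquetIntegral n δ Ω (fun y => ENNReal.ofReal |B.indicator (fun _ => (1 : ℝ)) y|) =
      dyadicContent n δ (Ω ∩ B) := by
  unfold choquetIntegral
  have hset : ∀ t ∈ Ioi (0 : ℝ), dyadicContent n δ {x | x ∈ Ω ∧
      ENNReal.ofReal t < ENNReal.ofReal |B.indicator (fun _ => (1 : ℝ)) x|} =
      (Iio (1 : ℝ)).indicator (fun _ => dyadicContent n δ (Ω ∩ B)) t := by
    intro t ht
    have ht' : (0 : ℝ) < t := ht
    by_cases h1 : t < 1
    · rw [indicator_of_mem (show t ∈ Iio (1 : ℝ) from h1)]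
      congr 1
      ext x
      by_cases hx : x ∈ B <;> simp [hx, h1]
    · rw [indicator_of_notMem (show t ∉ Iio (1 : ℝ) from h1), ← aux_content_empty (n := n) hδ]
      congr 1
      ext x
      push Not at h1
      by_cases hx : x ∈ B <;> simp [hx, h1]
  rw [setLIntegral_congr_fun measurableSet_Ioi hset, lintegral_indicator measurableSet_Iio,
    setLIntegral_const, Measure.restrict_apply measurableSet_Iio, Iio_inter_Ioi]
  simp

/-- A set meeting, over each base point, every left-neighbourhood closure is large. -/
theorem aux_sphere_pt {m : ℕ} (y : Fin m → ℝ) (hy : y ∈ closedBall (0 : Fin m → ℝ) (1 / (m + 1))) :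
    ∃ s : ℝ, 0 < s ∧ auxPt y s ∈ sphere (0 : En (m + 1)) 1 ∧
      ∀ t, 0 ≤ t → t < s → auxPt y t ∈ ball (0 : En (m + 1)) 1 := by
  have hlt := aux_sum_lt (m := m) one_pos y (fun j => by
    have h1 := dist_le_pi_dist y 0 j
    rw [Real.dist_eq] at h1
    simpa using h1.trans (mem_closedBall.1 hy))
  rw [one_pow] at hlt
  refine ⟨√(1 - ∑ j, y j ^ 2), Real.sqrt_pos.2 (by linarith), ?_, fun t ht0 hts => ?_⟩
  · rw [mem_sphere_zero_iff_norm]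
    have := aux_norm_pt y (√(1 - ∑ j, y j ^ 2))
    rw [Real.sq_sqrt (by linarith)] at this
    have h0 := norm_nonneg (auxPt y (√(1 - ∑ j, y j ^ 2)))
    nlinarith
  · rw [mem_ball_zero_iff]
    have h1 := aux_norm_pt y t
    have h2 : t ^ 2 < 1 - ∑ j, y j ^ 2 := (Real.lt_sqrt ht0).1 hts
    refine lt_of_pow_lt_pow_left₀ 2 one_pos.le ?_
    rw [h1]; linarith

theorem aux_cont_pt {m : ℕ} (y : Fin m → ℝ) : Continuous fun t : ℝ => auxPt y t := by
  unfold auxPt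
  refine (PiLp.continuous_toLp 2 _).comp ?_
  refine continuous_pi fun j => ?_
  refine Fin.lastCases ?_ (fun j => ?_) j
  · simpa using continuous_id'
  · simpa using continuous_const

theorem aux_proj_big {m : ℕ} {φ : En (m + 1) → ℝ} (hφ : Continuous φ) :
    closedBall (0 : Fin m → ℝ) (1 / (m + 1)) ⊆ auxProj '' {x | 1 / 4 <
      |(ball (0 : En (m + 1)) 1).indicator (fun _ => (1 : ℝ)) x - φ x|} := by
  intro y hy
  obtain ⟨s, hs, hsph, hin⟩ := aux_sphere_pt y hy
  by_cases h : 1 / 2 < φ (auxPt y s)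
  · refine ⟨auxPt y s, ?_, auxProj_pt _ _⟩
    have hnot : auxPt y s ∉ ball (0 : En (m + 1)) 1 := by
      rw [mem_sphere] at hsph
      rw [mem_ball, hsph]; exact lt_irrefl _
    rw [mem_ofPred_eq, indicator_of_notMem hnot, zero_sub, abs_neg]
    exact lt_of_lt_of_le (by linarith) (le_abs_self _)
  · have hc : Continuous fun t => φ (auxPt y t) := hφ.comp (aux_cont_pt y)
    have h1 : ∀ᶠ t in 𝓝[<] s, φ (auxPt y t) < 3 / 4 :=
      nhdsWithin_le_nhds (hc.continuousAt.eventually_lt_const (by linarith))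
    have h2 : ∀ᶠ t in 𝓝[<] s, 0 < t := nhdsWithin_le_nhds (lt_mem_nhds hs)
    obtain ⟨t, ⟨ht1, ht2⟩, ht3⟩ := ((h1.and h2).and self_mem_nhdsWithin).exists
    refine ⟨auxPt y t, ?_, auxProj_pt _ _⟩
    rw [mem_ofPred_eq, indicator_of_mem (hin t ht2.le ht3)]
    exact lt_of_lt_of_le (by linarith) (le_abs_self _)

theorem aux_integral_ge {n : ℕ} {δ : ℝ} (f : En n → ℝ) :
    dyadicContent n δ {x | 1 / 4 < |f x|} * ENNReal.ofReal (1 / 4) ≤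
      choquetIntegralAbs n δ univ f := by
  unfold choquetIntegralAbs choquetIntegral
  have h : ∫⁻ _ in Ioc (0 : ℝ) (1 / 4), dyadicContent n δ {x | 1 / 4 < |f x|} =
      dyadicContent n δ {x | 1 / 4 < |f x|} * ENNReal.ofReal (1 / 4) := by
    rw [setLIntegral_const, Real.volume_Ioc, sub_zero]
  rw [← h]
  refine le_trans ?_ (lintegral_mono_set (fun t ht => ht.1 : Ioc (0 : ℝ) (1 / 4) ⊆ Ioi 0))
  refine setLIntegral_mono' measurableSet_Ioc fun t ht => aux_content_mono ?_
  intro x hx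
  refine ⟨mem_univ _, ?_⟩
  have hx' : 1 / 4 < |f x| := hx
  exact (ENNReal.ofReal_lt_ofReal_iff (by linarith)).2 (ht.2.trans_lt hx')

/-- the characteristic function of the unit ball lies in
`nL¹(ℝⁿ, H̃^δ_∞)` for `0 < δ ≤ n − 1`, is Lebesgue measurable, but fails the Lebesgue
point property at every boundary point (with a uniform positive lower bound for the
limsup of averages); since `H̃^δ_∞(∂B) > 0`, it is not an `nL¹`-limit of continuous
functions, so continuous functions are not dense in `nL¹(ℝⁿ, H̃^δ_∞)`. -/
theorem char_ball_not_nL1_limit (n : ℕ) (hn : 2 ≤ n)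
    (δ : ℝ) (hδ0 : 0 < δ) (hδn : δ ≤ (n : ℝ) - 1)
    (χB : En n → ℝ) (hχB : χB = (ball (0 : En n) 1).indicator (fun _ => (1 : ℝ))) :
    choquetIntegralAbs n δ univ χB < ⊤ ∧
    NullMeasurable χB (volume : Measure (En n)) ∧
    (∃ c : ℝ, 0 < c ∧ ∀ x ∈ sphere (0 : En n) 1, χB x = 0 ∧
      ENNReal.ofReal c ≤ limsupAvg n δ (fun y => ENNReal.ofReal |χB y|) x) ∧
    0 < dyadicContent n δ (sphere (0 : En n) 1) ∧
    ¬ (∃ φ : ℕ → En n → ℝ, (∀ i, Continuous (φ i)) ∧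
      Tendsto (fun i => choquetIntegralAbs n δ univ (fun x => χB x - φ i x))
        atTop (𝓝 0)) := by
  obtain ⟨m, rfl⟩ : ∃ m, n = m + 1 := ⟨n - 1, by omega⟩
  have hδm : δ ≤ m := by push_cast at hδn; linarith
  have hm : (0 : ℝ) < m + 1 := by positivity
  have hpos : 0 < ENNReal.ofReal ((1 / ((m : ℝ) + 1)) ^ δ) :=
    ENNReal.ofReal_pos.2 (by positivity)
  have hS := auxS_ne_top hδ0
  subst hχB
  refine ⟨?_, ?_, ?_, ?_, ?_⟩
  · unfold choquetIntegralAbs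
    rw [aux_integral_ind hδ0, univ_inter]
    refine (aux_content_ball_le hδ0 0 one_pos).trans_lt ?_
    exact ENNReal.mul_lt_top ENNReal.ofReal_lt_top
      (ENNReal.add_lt_top.2 ⟨ENNReal.natCast_lt_top _, hS.lt_top⟩)
  · exact (measurable_const.indicator measurableSet_ball).nullMeasurable
  · set C : ℝ≥0∞ := (Fintype.card (Fin (m + 1) → Fin 3) : ℕ) + auxS δ with hC
    have hCt : C ≠ ⊤ := ENNReal.add_ne_top.2 ⟨ENNReal.natCast_ne_top _, hS⟩
    have hC0 : 0 < C.toReal := by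
      refine ENNReal.toReal_pos ?_ hCt
      rw [hC]
      simp
    refine ⟨(1 / (4 * ((m : ℝ) + 1))) ^ δ / C.toReal, by positivity, fun x hx => ⟨?_, ?_⟩⟩
    · refine indicator_of_notMem ?_ _
      rw [mem_sphere] at hx
      rw [mem_ball, hx]; exact lt_irrefl _
    · unfold limsupAvg
      refine le_limsup_of_frequently_le (Eventually.frequently ?_)
      filter_upwards [Ioo_mem_nhdsGT (one_pos (α := ℝ))] with r hr
      obtain ⟨hr0, hr1⟩ := hr
      unfold ballAvg
      rw [aux_integral_ind hδ0]
      have hxn : ‖x‖ = 1 := by simpa using hx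
      have hsub : ball ((1 - r / 2) • x) (r / 2) ⊆ ball x r ∩ ball 0 1 := by
        refine subset_inter (ball_subset_ball' ?_) (ball_subset_ball' ?_)
        · rw [dist_eq_norm, show (1 - r / 2) • x - x = (-(r / 2)) • x by module, norm_smul, hxn,
            Real.norm_eq_abs, abs_neg, abs_of_pos (by linarith)]
          linarith
        · rw [dist_zero_right, norm_smul, hxn, Real.norm_eq_abs, abs_of_pos (by linarith)]
          linarith
      have hlow := (aux_content_ball_ge hδ0 hδm ((1 - r / 2) • x) (half_pos hr0)).trans
        (aux_content_mono hsub)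
      have hup := aux_content_ball_le hδ0 x hr0
      have hb0 := aux_content_ball_ge hδ0 hδm x hr0
      rw [← hC] at hup
      rw [ENNReal.le_div_iff_mul_le]
      · refine (mul_le_mul_right hup _).trans (le_trans (le_of_eq ?_) hlow)
        rw [← ENNReal.ofReal_toReal hCt, ← ENNReal.ofReal_mul (by positivity),
          ← ENNReal.ofReal_mul (by positivity), ENNReal.toReal_ofReal hC0.le]
        congr 1
        rw [show r / 2 / ((m : ℝ) + 1) = (1 / (4 * ((m : ℝ) + 1))) * (2 * r) by field_simp; norm_num,
          Real.mul_rpow (x := 1 / (4 * ((m : ℝ) + 1))) (by positivity) (by positivity)]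
        rw [mul_comm ((2 * r) ^ δ), ← mul_assoc, div_mul_cancel₀ _ hC0.ne']
      · left
        refine (lt_of_lt_of_le (ENNReal.ofReal_pos.2 ?_) hb0).ne'
        positivity
      · left
        exact ne_top_of_le_ne_top (ENNReal.mul_ne_top ENNReal.ofReal_ne_top hCt) hup
  · refine hpos.trans_le (aux_content_ge hδ0 hδm (y0 := 0) (by positivity) ?_)
    intro y hy
    obtain ⟨s, _, hs, _⟩ := aux_sphere_pt y hy
    exact ⟨_, hs, auxProj_pt _ _⟩
  · rintro ⟨φ, hφ, hlim⟩
    have hge : ∀ i, ENNReal.ofReal ((1 / ((m : ℝ) + 1)) ^ δ) * ENNReal.ofReal (1 / 4) ≤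
        choquetIntegralAbs (m + 1) δ univ (fun x =>
          (ball (0 : En (m + 1)) 1).indicator (fun _ => (1 : ℝ)) x - φ i x) := fun i =>
      (mul_le_mul_left (aux_content_ge hδ0 hδm (by positivity) (aux_proj_big (hφ i))) _).trans
        (aux_integral_ge _)
    have h0 := ge_of_tendsto' hlim hge
    have : 0 < ENNReal.ofReal ((1 / ((m : ℝ) + 1)) ^ δ) * ENNReal.ofReal (1 / 4) :=
      ENNReal.mul_pos hpos.ne' (ENNReal.ofReal_pos.2 (by norm_num)).ne'
    exact absurd h0 (not_le.2 this)
end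
end
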